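/- Let X be a domain, n ≥ 1, ε > 0, and let A be a mechanism assigning to each size-n database over X a probability distribution on an output space R. Suppose A satisfies (ε, β)-distributional privacy with β < 1/(n+1)². Then for every pair of size-n databases D₁, D₂, each consisting of n distinct elements of X and such that D₂ can be obtained from D₁ by replacing a single element, and for every event E ⊆ R: Pr[A(D₁) ∈ E] ≤ e^ε · Pr[A(D₂) ∈ E]. -/

import Mathlib

attribute [local instance] Classical.propDecidable

open MeasureTheory

theorem stmt16 {X : Type*} [DecidableEq X] {R : Type*} (n : ℕ) (hn : 1 ≤ n)
    (ε β : ℝ) (hε : 0 < ε) (hβ : β < 1 / ((n : ℝ) + 1) ^ 2)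
    (A : Multiset X → @Measure R ⊤)
    -- A(D) is a probability distribution on R
    (hprob : ∀ D : Multiset X, D.card = n → @IsProbabilityMeasure R ⊤ (A D))
    -- A satisfies (ε, β)-distributional privacy: for every S ⊆ X with |S| ≥ n, when two
    -- size-n databases are drawn uniformly (without replacement, i.e. as n-element subsets)
    -- and independently from S, with probability at least 1 − β the pair satisfies the
    -- ε-indistinguishability condition for all events
    (hdist : ∀ S : Finset X, n ≤ S.card →
      (1 - β) * ((S.powersetCard n).card : ℝ) * ((S.powersetCard n).card : ℝ) ≤
        (((S.powersetCard n ×ˢ S.powersetCard n).filter (fun p =>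
          ∀ E : Set R,
            A p.1.val E ≤ ENNReal.ofReal (Real.exp ε) * A p.2.val E)).card : ℝ)) :
    -- conclusion: ε-differential privacy for databases of n distinct elements that differ
    -- by the replacement of a single element
    ∀ D₁ D₂ : Finset X, D₁.card = n → D₂.card = n → (D₁ \ D₂).card ≤ 1 →
      ∀ E : Set R, A D₁.val E ≤ ENNReal.ofReal (Real.exp ε) * A D₂.val E := by
  intro D₁ D₂ h1 h2 hd E
  by_contra hE
  have hcard : (D₁ ∪ D₂).card = (D₁ \ D₂).card + n := by
    rw [← h2, ← Finset.card_sdiff_add_card]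
  have hS := hdist (D₁ ∪ D₂) (by omega)
  have hC : ((D₁ ∪ D₂).powersetCard n).card ≤ n + 1 := by
    rw [Finset.card_powersetCard, hcard]
    have h01 : (D₁ \ D₂).card = 0 ∨ (D₁ \ D₂).card = 1 := by omega
    rcases h01 with h | h
    · simp [h]
    · rw [h, Nat.add_comm, Nat.choose_succ_self_right]
  have hlt := Finset.card_lt_card (Finset.filter_ssubset
    (p := fun p : Finset X × Finset X => ∀ E : Set R,
            A p.1.val E ≤ ENNReal.ofReal (Real.exp ε) * A p.2.val E)
    (s := (D₁ ∪ D₂).powersetCard n ×ˢ (D₁ ∪ D₂).powersetCard n) |>.2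
    ⟨(D₁, D₂), by simp [Finset.mem_powersetCard, h1, h2], fun h => hE (h E)⟩)
  rw [Finset.card_product] at hlt
  have hlt' := Nat.succ_le_of_lt hlt
  have hltR : (_ : ℝ) ≤ _ := Nat.cast_le (α := ℝ).2 hlt'
  push_cast at hltR
  have hCR : (((D₁ ∪ D₂).powersetCard n).card : ℝ) ≤ n + 1 := by exact_mod_cast hC
  have hc0 : (0 : ℝ) ≤ (((D₁ ∪ D₂).powersetCard n).card : ℝ) := Nat.cast_nonneg _
  generalize (((D₁ ∪ D₂).powersetCard n).card : ℝ) = c at *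
  have hc1 : 1 ≤ β * (c * c) := by linarith
  have hβ0 : 0 < β := by
    by_contra hn0
    nlinarith [mul_self_nonneg c]
  have hcc : c * c ≤ ((n : ℝ) + 1) ^ 2 := by
    nlinarith
  rw [lt_div_iff₀ (by positivity)] at hβ
  nlinarith [mul_le_mul_of_nonneg_left hcc hβ0.le]
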